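/- arXiv:1910.03660 — 3 statements merged into one kernel-verified Lean document; each statement's English description precedes it below -/
import Mathlib

section
/- (Theorem 1, closed form of the RBRIDGE estimator.) For every β ∈ ℝᵖ with Rβ = r, the penalized objective satisfies ‖Y − X β̂ᴿ‖² + (β̂ᴿ)ᵀ Σ β̂ᴿ ≤ ‖Y − Xβ‖² + βᵀ Σ β; that is, β̂ᴿ minimizes the locally quadratically approximated bridge objective over the affine set {β : Rβ = r}. -/
open Matrix

/-!
With `S = XᵀX + Σ`, the bridge estimator `β̂` solves the normal equations `S β̂ = XᵀY`, so the
objective at `β` exceeds its value at `β̂` by `(β - β̂)ᵀ S (β - β̂)`. Minimizing it under `R β = r`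
means finding the point of this affine subspace nearest to `β̂` for the inner product of `S`. The
restricted estimator is that orthogonal projection: it satisfies the constraint, and
`S (β̂ - β̂ᴿ)` lies in the range of `Rᵀ`, hence is orthogonal to every direction `d` with `R d = 0`.
Pythagoras' theorem concludes.
-/

section CommRing

variable {K l m n : Type*} [CommRing K] [Fintype l] [Fintype m] [Fintype n]

theorem sub_dotProduct_mulVec_sub_of_isSymm {A : Matrix n n K} (hA : A.IsSymm) (u v : n → K) :
    (u - v) ⬝ᵥ A *ᵥ (u - v) = u ⬝ᵥ A *ᵥ u - 2 * (u ⬝ᵥ A *ᵥ v) + v ⬝ᵥ A *ᵥ v := by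
  have hcomm : v ⬝ᵥ A *ᵥ u = u ⬝ᵥ A *ᵥ v := by
    simpa only [hA.eq] using dotProduct_transpose_mulVec A v u
  rw [mulVec_sub, sub_dotProduct, dotProduct_sub, dotProduct_sub, hcomm]
  ring

/-- The penalized least-squares objective `‖Y - X β‖² + βᵀ Σ β`; the squared Euclidean norm is
written as a dot product, since `n → K` carries no Euclidean norm. -/
def penalizedRSS (X : Matrix l n K) (Y : l → K) (Sig : Matrix n n K) (β : n → K) : K :=
  (Y - X *ᵥ β) ⬝ᵥ (Y - X *ᵥ β) + β ⬝ᵥ Sig *ᵥ β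

theorem penalizedRSS_eq_quadratic (X : Matrix l n K) (Y : l → K) (Sig : Matrix n n K) (β : n → K) :
    penalizedRSS X Y Sig β =
      Y ⬝ᵥ Y - 2 * (β ⬝ᵥ Xᵀ *ᵥ Y) + β ⬝ᵥ (Xᵀ * X + Sig) *ᵥ β := by
  rw [penalizedRSS, add_mulVec, dotProduct_add, ← mulVec_mulVec, dotProduct_transpose_mulVec,
    dotProduct_transpose_mulVec, sub_dotProduct, dotProduct_sub, dotProduct_sub,
    dotProduct_comm (X *ᵥ β) Y]
  ring

theorem penalizedRSS_eq_add_of_normal_equations {X : Matrix l n K} {Y : l → K} {Sig : Matrix n n K}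
    (hS : (Xᵀ * X + Sig).IsSymm) {b : n → K} (hb : (Xᵀ * X + Sig) *ᵥ b = Xᵀ *ᵥ Y) (β : n → K) :
    penalizedRSS X Y Sig β =
      penalizedRSS X Y Sig b + (β - b) ⬝ᵥ (Xᵀ * X + Sig) *ᵥ (β - b) := by
  rw [penalizedRSS_eq_quadratic, penalizedRSS_eq_quadratic,
    sub_dotProduct_mulVec_sub_of_isSymm hS, hb]
  ring

variable [DecidableEq m] [DecidableEq n]

/-- The projection of `b` onto the affine subspace `{β | R β = r}`, orthogonal with respect to the
bilinear form of `S`; it turns the bridge estimator into the restricted one. Matrix inverses are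
zero on singular matrices, so the formula has this meaning only for invertible `S` and
`R S⁻¹ Rᵀ`. -/
noncomputable def affineProjection (S : Matrix n n K) (R : Matrix m n K) (r : m → K) (b : n → K) :
    n → K :=
  b - (S⁻¹ * Rᵀ * (R * S⁻¹ * Rᵀ)⁻¹) *ᵥ (R *ᵥ b - r)

theorem mulVec_affineProjection {S : Matrix n n K} {R : Matrix m n K}
    (hR : IsUnit (R * S⁻¹ * Rᵀ)) (r : m → K) (b : n → K) :
    R *ᵥ affineProjection S R r b = r := by
  have hinv : R * (S⁻¹ * Rᵀ * (R * S⁻¹ * Rᵀ)⁻¹) = 1 := by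
    rw [← Matrix.mul_assoc, ← Matrix.mul_assoc, mul_nonsing_inv _ ((isUnit_iff_isUnit_det _).1 hR)]
  rw [affineProjection, mulVec_sub, mulVec_mulVec, hinv, one_mulVec, sub_sub_cancel]

theorem dotProduct_mulVec_affineProjection_sub_eq_zero {S : Matrix n n K} (hS : IsUnit S)
    {R : Matrix m n K} {d : n → K} (hd : R *ᵥ d = 0) (r : m → K) (b : n → K) :
    d ⬝ᵥ S *ᵥ (affineProjection S R r b - b) = 0 := by
  have hrange : S *ᵥ (affineProjection S R r b - b) =
      -(Rᵀ *ᵥ (R * S⁻¹ * Rᵀ)⁻¹ *ᵥ (R *ᵥ b - r)) := by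
    rw [affineProjection, sub_sub_cancel_left, mulVec_neg, mulVec_mulVec, mulVec_mulVec,
      Matrix.mul_assoc S⁻¹, mul_nonsing_inv_cancel_left _ _ ((isUnit_iff_isUnit_det _).1 hS)]
  rw [hrange, dotProduct_neg, dotProduct_transpose_mulVec, hd, dotProduct_zero, neg_zero]

theorem sub_dotProduct_mulVec_sub_eq_affineProjection_add {S : Matrix n n K} (hSymm : S.IsSymm)
    (hS : IsUnit S) {R : Matrix m n K} (hR : IsUnit (R * S⁻¹ * Rᵀ)) {r : m → K} (b : n → K)
    {β : n → K} (hβ : R *ᵥ β = r) :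
    (β - b) ⬝ᵥ S *ᵥ (β - b) =
      (affineProjection S R r b - b) ⬝ᵥ S *ᵥ (affineProjection S R r b - b) +
        (β - affineProjection S R r b) ⬝ᵥ S *ᵥ (β - affineProjection S R r b) := by
  set π := affineProjection S R r b with hπ
  have hker : R *ᵥ (β - π) = 0 := by
    rw [mulVec_sub, hβ, hπ, mulVec_affineProjection hR, sub_self]
  have horth : (β - π) ⬝ᵥ S *ᵥ (π - b) = 0 :=
    dotProduct_mulVec_affineProjection_sub_eq_zero hS hker r b
  have hexpand := sub_dotProduct_mulVec_sub_of_isSymm hSymm (β - π) (b - π)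
  rw [sub_sub_sub_cancel_right] at hexpand
  rw [hexpand, ← neg_sub π b, mulVec_neg, dotProduct_neg, horth, neg_dotProduct_neg]
  ring

end CommRing

section Field

variable {K l m n : Type*} [Field K] [Fintype m] [Fintype n]

theorem vecMul_injective_of_rank_eq_card {R : Matrix m n K} (hR : R.rank = Fintype.card m) :
    Function.Injective R.vecMul := by
  rw [vecMul_injective_iff, linearIndependent_iff_card_eq_finrank_span, Set.finrank,
    ← rank_eq_finrank_span_row, hR]

variable [PartialOrder K] [StarRing K] [TrivialStar K] [DecidableEq n]

theorem posDef_mul_inv_mul_transpose {S : Matrix n n K} (hS : S.PosDef) {R : Matrix m n K}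
    (hR : R.rank = Fintype.card m) : (R * S⁻¹ * Rᵀ).PosDef := by
  simpa only [conjTranspose_eq_transpose_of_trivial] using
    hS.inv.mul_mul_conjTranspose_same (vecMul_injective_of_rank_eq_card hR)

theorem rbridge_is_minimizer_general [IsOrderedAddMonoid K] [Fintype l] [DecidableEq m]
    (X : Matrix l n K) (Y : l → K) (Sig : Matrix n n K) (hS : (Xᵀ * X + Sig).PosDef)
    (R : Matrix m n K) (hR : R.rank = Fintype.card m) (r : m → K) :
    IsMinOn (penalizedRSS X Y Sig) {β | R *ᵥ β = r}
      (affineProjection (Xᵀ * X + Sig) R r ((Xᵀ * X + Sig)⁻¹ *ᵥ Xᵀ *ᵥ Y)) := by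
  set S := Xᵀ * X + Sig
  set b := S⁻¹ *ᵥ Xᵀ *ᵥ Y
  have hsymm : S.IsSymm := isHermitian_iff_isSymm.1 hS.isHermitian
  have hnormal : S *ᵥ b = Xᵀ *ᵥ Y := by
    rw [mulVec_mulVec, mul_nonsing_inv _ ((isUnit_iff_isUnit_det _).1 hS.isUnit), one_mulVec]
  refine isMinOn_iff.2 fun β hβ ↦ ?_
  have hpyth := sub_dotProduct_mulVec_sub_eq_affineProjection_add hsymm hS.isUnit
    (posDef_mul_inv_mul_transpose hS hR).isUnit b hβ
  have hnonneg := hS.posSemidef.dotProduct_mulVec_nonneg (β - affineProjection S R r b)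
  rw [star_trivial] at hnonneg
  rw [penalizedRSS_eq_add_of_normal_equations hsymm hnormal β,
    penalizedRSS_eq_add_of_normal_equations hsymm hnormal (affineProjection S R r b), hpyth,
    ← add_assoc]
  exact le_add_of_nonneg_right hnonneg

end Field

/-- Theorem 1 (closed form of the RBRIDGE estimator): the restricted bridge estimator
minimizes the locally quadratically approximated bridge objective
`β ↦ ‖Y − Xβ‖² + βᵀ Σ β` over the affine set `{β : Rβ = r}`. -/
theorem rbridge_is_minimizer {n p m : ℕ} (hn : 0 < n) (hp : 0 < p) (hm : 0 < m)
    (hmp : m ≤ p)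
    (X : Matrix (Fin n) (Fin p) ℝ) (Y : Fin n → ℝ)
    (Sig : Matrix (Fin p) (Fin p) ℝ) (hSig : Sig.PosSemidef)
    (hS : (Xᵀ * X + Sig).PosDef)
    (R : Matrix (Fin m) (Fin p) ℝ) (hR : R.rank = m) (r : Fin m → ℝ) :
    let S := Xᵀ * X + Sig
    let βhat := S⁻¹.mulVec (Xᵀ.mulVec Y)
    let βhatR := βhat - (S⁻¹ * Rᵀ * (R * S⁻¹ * Rᵀ)⁻¹).mulVec (R.mulVec βhat - r)
    ∀ β : Fin p → ℝ, R.mulVec β = r →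
      (Y - X.mulVec βhatR) ⬝ᵥ (Y - X.mulVec βhatR) + βhatR ⬝ᵥ Sig.mulVec βhatR ≤
        (Y - X.mulVec β) ⬝ᵥ (Y - X.mulVec β) + β ⬝ᵥ Sig.mulVec β := by
  intro _ _ _ β hβ
  exact isMinOn_iff.1
    (rbridge_is_minimizer_general X Y Sig hS R (hR.trans (Fintype.card_fin m).symm) r) β hβ
end

section
/- (Linear representation of the RBRIDGE estimator.) The restricted bridge estimator can be written as β̂ᴿ = M Xᵀ Y + S⁻¹Rᵀ(R S⁻¹ Rᵀ)⁻¹ r. Consequently, for any β ∈ ℝᵖ with Rβ = r one has β̂ᴿ − β = M Xᵀ (Y − Xβ) − M Σ β. -/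
open Matrix

/-!
For any gain matrix `K`, the correction `b ↦ b - K (R b - r)` is affine with linear part `1 - K R`,
and it fixes every `β` satisfying the restriction `R β = r`; so it acts on errors `b - β` by
`1 - K R`. With `S = Z X + P`, the normal equations `S β̂ = Z Y` give
`S (β̂ - β) = Z (Y - X β) - P β`, and the two facts combine because `M = (1 - K R) S⁻¹`.
The RBRIDGE estimator is the case `Z = Xᵀ`, `P = Σ`, `K = S⁻¹ Rᵀ (R S⁻¹ Rᵀ)⁻¹`.
-/

section Restriction

variable {A m p : Type*} [Ring A] [Fintype m] [Fintype p] [DecidableEq p]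

theorem sub_mulVec_residual_eq_add (K : Matrix p m A) (R : Matrix m p A) (r : m → A) (b : p → A) :
    b - K *ᵥ (R *ᵥ b - r) = (1 - K * R) *ᵥ b + K *ᵥ r := by
  rw [mulVec_sub, sub_mulVec, one_mulVec, mulVec_mulVec, sub_add]

theorem sub_mulVec_residual_sub_eq (K : Matrix p m A) (R : Matrix m p A) {r : m → A}
    {β : p → A} (hβ : R *ᵥ β = r) (b : p → A) :
    b - K *ᵥ (R *ᵥ b - r) - β = (1 - K * R) *ᵥ (b - β) := by
  rw [← hβ, ← mulVec_sub, mulVec_mulVec, sub_mulVec, one_mulVec, sub_right_comm]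

end Restriction

section Penalized

variable {A m n p : Type*} [CommRing A] [Fintype m] [Fintype n] [Fintype p] [DecidableEq p]

theorem penalized_estimator_sub_eq (Z : Matrix p n A) (X : Matrix n p A) (P : Matrix p p A)
    (hS : IsUnit (Z * X + P)) (Y : n → A) (β : p → A) :
    (Z * X + P)⁻¹ *ᵥ (Z *ᵥ Y) - β =
      (Z * X + P)⁻¹ *ᵥ (Z *ᵥ (Y - X *ᵥ β) - P *ᵥ β) := by
  have hinv : (Z * X + P)⁻¹ *ᵥ ((Z * X + P) *ᵥ β) = β := by
    rw [mulVec_mulVec, nonsing_inv_mul _ ((isUnit_iff_isUnit_det _).1 hS), one_mulVec]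
  calc (Z * X + P)⁻¹ *ᵥ (Z *ᵥ Y) - β
      = (Z * X + P)⁻¹ *ᵥ (Z *ᵥ Y - (Z * X + P) *ᵥ β) := by rw [mulVec_sub, hinv]
    _ = (Z * X + P)⁻¹ *ᵥ (Z *ᵥ (Y - X *ᵥ β) - P *ᵥ β) := by
      rw [add_mulVec, ← mulVec_mulVec, ← sub_sub, ← mulVec_sub]

theorem rbridge_linear_representation_general (Z : Matrix p n A) (X : Matrix n p A) (Y : n → A)
    (P : Matrix p p A) (hS : IsUnit (Z * X + P)) (R : Matrix m p A) (K : Matrix p m A)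
    (r : m → A) :
    let S := Z * X + P
    let βhat := S⁻¹ *ᵥ (Z *ᵥ Y)
    let βhatR := βhat - K *ᵥ (R *ᵥ βhat - r)
    let M := S⁻¹ - K * R * S⁻¹
    βhatR = M *ᵥ (Z *ᵥ Y) + K *ᵥ r ∧
      ∀ β : p → A, R *ᵥ β = r →
        βhatR - β = M *ᵥ (Z *ᵥ (Y - X *ᵥ β)) - M *ᵥ (P *ᵥ β) := by
  intro S βhat βhatR M
  have hM (v : p → A) : M *ᵥ v = (1 - K * R) *ᵥ (S⁻¹ *ᵥ v) := by
    rw [mulVec_mulVec, Matrix.sub_mul, Matrix.one_mul]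
  refine ⟨?_, fun β hβ => ?_⟩
  · rw [hM]
    exact sub_mulVec_residual_eq_add K R r βhat
  · calc βhatR - β
        = (1 - K * R) *ᵥ (βhat - β) := sub_mulVec_residual_sub_eq K R hβ βhat
      _ = M *ᵥ (Z *ᵥ (Y - X *ᵥ β) - P *ᵥ β) := by
        rw [hM, penalized_estimator_sub_eq Z X P hS Y β]
      _ = M *ᵥ (Z *ᵥ (Y - X *ᵥ β)) - M *ᵥ (P *ᵥ β) := mulVec_sub _ _ _

end Penalized

/-- Linear representation of the RBRIDGE estimator:
`β̂ᴿ = M Xᵀ Y + S⁻¹Rᵀ(R S⁻¹ Rᵀ)⁻¹ r`, and consequently, for any `β` with `Rβ = r`,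
`β̂ᴿ − β = M Xᵀ (Y − Xβ) − M Σ β`. -/
theorem rbridge_linear_representation {n p m : ℕ} (hn : 0 < n) (hp : 0 < p) (hm : 0 < m)
    (hmp : m ≤ p)
    (X : Matrix (Fin n) (Fin p) ℝ) (Y : Fin n → ℝ)
    (Sig : Matrix (Fin p) (Fin p) ℝ) (hSig : Sig.PosSemidef)
    (hS : (Xᵀ * X + Sig).PosDef)
    (R : Matrix (Fin m) (Fin p) ℝ) (hR : R.rank = m) (r : Fin m → ℝ) :
    let S := Xᵀ * X + Sig
    let βhat := S⁻¹.mulVec (Xᵀ.mulVec Y)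
    let βhatR := βhat - (S⁻¹ * Rᵀ * (R * S⁻¹ * Rᵀ)⁻¹).mulVec (R.mulVec βhat - r)
    let M := S⁻¹ - S⁻¹ * Rᵀ * (R * S⁻¹ * Rᵀ)⁻¹ * R * S⁻¹
    βhatR = M.mulVec (Xᵀ.mulVec Y) + (S⁻¹ * Rᵀ * (R * S⁻¹ * Rᵀ)⁻¹).mulVec r ∧
      ∀ β : Fin p → ℝ, R.mulVec β = r →
        βhatR - β = M.mulVec (Xᵀ.mulVec (Y - X.mulVec β)) - M.mulVec (Sig.mulVec β) :=
  rbridge_linear_representation_general Xᵀ X Y Sig hS.isUnit R _ r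
end

section
/- (Bias of the RBRIDGE estimator, from Theorem 2.) Under the linear model Y = Xβ + ε with E[ε_i] = 0 for all i and under the restriction Rβ = r, each component of β̂ᴿ is integrable and E[β̂ᴿ] = β − M Σ β; that is, the bias of the RBRIDGE estimator equals −M Σ β. -/
open Matrix MeasureTheory

/-!
Write `β̂ = S⁻¹AY` with `S = AX + Σ`. Both `Y ↦ β̂` and the correction `b ↦ b - K(Rb - r)` are
affine, so expectations pass through them and `Y` may be replaced by its mean `Xβ`. Since
`AX = S - Σ`, the mean of `β̂` is `β - S⁻¹Σβ`. The correction fixes every `β` with `Rβ = r`,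
whatever the gain `K`, and has linear part `1 - KR`, so it turns the bias `-S⁻¹Σβ` into
`-(1 - KR)S⁻¹Σβ = -MΣβ`.
-/

section PenalizedEstimator

variable {α ι κ : Type*} [Fintype ι] [Fintype κ] [DecidableEq κ] [CommRing α]

/-- The penalized estimator `(AX + Σ)⁻¹Ay`; the bridge estimator is the case `A = Xᵀ`. -/
noncomputable def penalizedEstimator (A : Matrix κ ι α) (X : Matrix ι κ α) (Sig : Matrix κ κ α)
    (y : ι → α) : κ → α :=
  (A * X + Sig)⁻¹ *ᵥ (A *ᵥ y)

theorem penalizedEstimator_mulVec {A : Matrix κ ι α} {X : Matrix ι κ α} {Sig : Matrix κ κ α}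
    (hS : IsUnit (A * X + Sig)) (β : κ → α) :
    penalizedEstimator A X Sig (X *ᵥ β) = β - (A * X + Sig)⁻¹ *ᵥ (Sig *ᵥ β) := by
  have hdet : IsUnit (A * X + Sig).det := (isUnit_iff_isUnit_det _).1 hS
  rw [penalizedEstimator, eq_sub_iff_add_eq]
  calc (A * X + Sig)⁻¹ *ᵥ (A *ᵥ (X *ᵥ β)) + (A * X + Sig)⁻¹ *ᵥ (Sig *ᵥ β)
      = (A * X + Sig)⁻¹ *ᵥ ((A * X + Sig) *ᵥ β) := by
        rw [add_mulVec, mulVec_add, mulVec_mulVec β A X]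
    _ = β := by rw [mulVec_mulVec, nonsing_inv_mul _ hdet, one_mulVec]

end PenalizedEstimator

section RestrictionCorrection

variable {α κ τ : Type*} [Fintype κ] [Fintype τ] [NonUnitalNonAssocRing α]

/-- The correction of an estimate `b` towards the restriction `Rb = r` with gain matrix `K`; the
RBRIDGE estimator uses `K = S⁻¹Rᵀ(RS⁻¹Rᵀ)⁻¹`. -/
def restrictionCorrection (R : Matrix τ κ α) (K : Matrix κ τ α) (r : τ → α) (b : κ → α) : κ → α :=
  b - K *ᵥ (R *ᵥ b - r)

theorem restrictionCorrection_sub {R : Matrix τ κ α} {r : τ → α} {β : κ → α}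
    (hβ : R *ᵥ β = r) (K : Matrix κ τ α) (d : κ → α) :
    restrictionCorrection R K r (β - d) = β - (d - K *ᵥ (R *ᵥ d)) := by
  rw [restrictionCorrection, mulVec_sub R, hβ, sub_sub_cancel_left, mulVec_neg]
  abel

end RestrictionCorrection

section Expectation

variable {𝕜 ι κ τ Ω : Type*} [RCLike 𝕜] [Fintype ι] [Fintype κ] [Fintype τ]
  [MeasurableSpace Ω] {μ : Measure Ω}

theorem integrable_mulVec (A : Matrix κ ι 𝕜) {f : Ω → ι → 𝕜} (hf : Integrable f μ) :
    Integrable (fun ω => A *ᵥ f ω) μ :=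
  A.mulVecLin.toContinuousLinearMap.integrable_comp hf

theorem integral_mulVec (A : Matrix κ ι 𝕜) {f : Ω → ι → 𝕜} (hf : Integrable f μ) :
    ∫ ω, A *ᵥ f ω ∂μ = A *ᵥ ∫ ω, f ω ∂μ :=
  A.mulVecLin.toContinuousLinearMap.integral_comp_comm hf

theorem integrable_penalizedEstimator [DecidableEq κ] (A : Matrix κ ι 𝕜) (X : Matrix ι κ 𝕜)
    (Sig : Matrix κ κ 𝕜) {Y : Ω → ι → 𝕜} (hY : Integrable Y μ) :
    Integrable (fun ω => penalizedEstimator A X Sig (Y ω)) μ :=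
  integrable_mulVec _ (integrable_mulVec _ hY)

theorem integral_penalizedEstimator [DecidableEq κ] (A : Matrix κ ι 𝕜) (X : Matrix ι κ 𝕜)
    (Sig : Matrix κ κ 𝕜) {Y : Ω → ι → 𝕜} (hY : Integrable Y μ) :
    ∫ ω, penalizedEstimator A X Sig (Y ω) ∂μ = penalizedEstimator A X Sig (∫ ω, Y ω ∂μ) := by
  simp only [penalizedEstimator, integral_mulVec _ (integrable_mulVec A hY), integral_mulVec A hY]

theorem integrable_restrictionCorrection [IsFiniteMeasure μ] (R : Matrix τ κ 𝕜)
    (K : Matrix κ τ 𝕜) (r : τ → 𝕜) {b : Ω → κ → 𝕜} (hb : Integrable b μ) :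
    Integrable (fun ω => restrictionCorrection R K r (b ω)) μ :=
  hb.sub (integrable_mulVec K ((integrable_mulVec R hb).sub (integrable_const r)))

theorem integral_restrictionCorrection [IsProbabilityMeasure μ] (R : Matrix τ κ 𝕜)
    (K : Matrix κ τ 𝕜) (r : τ → 𝕜) {b : Ω → κ → 𝕜} (hb : Integrable b μ) :
    ∫ ω, restrictionCorrection R K r (b ω) ∂μ = restrictionCorrection R K r (∫ ω, b ω ∂μ) := by
  have hRb : Integrable (fun ω => R *ᵥ b ω) μ := integrable_mulVec R hb
  have hres : Integrable (fun ω => R *ᵥ b ω - r) μ := hRb.sub (integrable_const r)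
  simp only [restrictionCorrection]
  rw [integral_sub hb (integrable_mulVec K hres), integral_mulVec K hres,
    integral_sub hRb (integrable_const r), integral_mulVec R hb, integral_const, probReal_univ,
    one_smul]

theorem rbridge_bias_general [DecidableEq κ] [IsProbabilityMeasure μ]
    (A : Matrix κ ι 𝕜) (X : Matrix ι κ 𝕜) (Sig : Matrix κ κ 𝕜) (hS : IsUnit (A * X + Sig))
    (R : Matrix τ κ 𝕜) (K : Matrix κ τ 𝕜) (r : τ → 𝕜) (β : κ → 𝕜) (hβ : R *ᵥ β = r)
    (ε : Ω → ι → 𝕜) (hint : ∀ i, Integrable (fun ω => ε ω i) μ)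
    (hmean : ∀ i, ∫ ω, ε ω i ∂μ = 0) :
    let S := A * X + Sig
    let βhatR : Ω → κ → 𝕜 := fun ω =>
      restrictionCorrection R K r (penalizedEstimator A X Sig (X *ᵥ β + ε ω))
    let M := S⁻¹ - K * R * S⁻¹
    (∀ j, Integrable (fun ω => βhatR ω j) μ) ∧
      ∀ j, ∫ ω, βhatR ω j ∂μ = (β - M *ᵥ (Sig *ᵥ β)) j := by
  intro S βhatR M
  have hε : Integrable ε μ := .of_eval hint
  have hε_mean : ∫ ω, ε ω ∂μ = 0 := funext fun i => (eval_integral hint i).trans (hmean i)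
  have hY : Integrable (fun ω => X *ᵥ β + ε ω) μ := (integrable_const _).add hε
  have hY_mean : ∫ ω, X *ᵥ β + ε ω ∂μ = X *ᵥ β := by
    rw [integral_add (integrable_const _) hε, hε_mean, add_zero, integral_const, probReal_univ,
      one_smul]
  have hβhat := integrable_penalizedEstimator A X Sig hY
  have hβhatR : Integrable βhatR μ := integrable_restrictionCorrection R K r hβhat
  have hβhatR_mean : ∫ ω, βhatR ω ∂μ = β - M *ᵥ (Sig *ᵥ β) := by
    rw [integral_restrictionCorrection R K r hβhat, integral_penalizedEstimator A X Sig hY,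
      hY_mean, penalizedEstimator_mulVec hS, restrictionCorrection_sub hβ]
    simp only [M, S, sub_mulVec, ← mulVec_mulVec]
  exact ⟨hβhatR.eval, fun j => by rw [← eval_integral hβhatR.eval, hβhatR_mean]⟩

end Expectation

/-- Bias of the RBRIDGE estimator (from Theorem 2): under the linear model `Y = Xβ + ε`
with `E[εᵢ] = 0` and under the restriction `Rβ = r`, each component of `β̂ᴿ` is
integrable and `E[β̂ᴿ] = β − M Σ β`; i.e. the bias of the RBRIDGE estimator is `−MΣβ`. -/
theorem rbridge_bias {n p m : ℕ} (hn : 0 < n) (hp : 0 < p) (hm : 0 < m) (hmp : m ≤ p)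
    (X : Matrix (Fin n) (Fin p) ℝ)
    (Sig : Matrix (Fin p) (Fin p) ℝ) (hSig : Sig.PosSemidef)
    (hS : (Xᵀ * X + Sig).PosDef)
    (R : Matrix (Fin m) (Fin p) ℝ) (hR : R.rank = m) (r : Fin m → ℝ)
    {Ω : Type*} [MeasurableSpace Ω] (μ : Measure Ω) [IsProbabilityMeasure μ]
    (β : Fin p → ℝ) (hβ : R.mulVec β = r) (ε : Ω → Fin n → ℝ)
    (hint : ∀ i, Integrable (fun ω => ε ω i) μ)
    (hmean : ∀ i, ∫ ω, ε ω i ∂μ = 0) :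
    let S := Xᵀ * X + Sig
    let Y : Ω → Fin n → ℝ := fun ω => X.mulVec β + ε ω
    let βhat : Ω → Fin p → ℝ := fun ω => S⁻¹.mulVec (Xᵀ.mulVec (Y ω))
    let βhatR : Ω → Fin p → ℝ := fun ω =>
      βhat ω - (S⁻¹ * Rᵀ * (R * S⁻¹ * Rᵀ)⁻¹).mulVec (R.mulVec (βhat ω) - r)
    let M := S⁻¹ - S⁻¹ * Rᵀ * (R * S⁻¹ * Rᵀ)⁻¹ * R * S⁻¹
    (∀ j, Integrable (fun ω => βhatR ω j) μ) ∧
      ∀ j, ∫ ω, βhatR ω j ∂μ = (β - M.mulVec (Sig.mulVec β)) j :=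
  rbridge_bias_general Xᵀ X Sig hS.isUnit R _ r β hβ ε hint hmean
end
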